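/- arXiv:1911.08951 — 2 statements merged into one kernel-verified Lean document; each statement's English description precedes it below -/
import Mathlib

section
/- A countable group G has a Følner sequence if and only if G has a Følner exhaustion, i.e. a Følner sequence (F_n)_{n∈ℕ} with 1 ∈ F_1 ⊆ F_2 ⊆ ⋯ and G = ⋃_{n∈ℕ} F_n. -/
open scoped Classical

/-- A Følner sequence in `G`: a sequence `(F_n)` of finite nonempty subsets of `G` with
`lim_{n→∞} |F_n \ F_n g| / |F_n| = 0` for every `g ∈ G`. -/
def IsFolnerSequence {G : Type*} [Group G] (F : ℕ → Finset G) : Prop :=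
  (∀ n, (F n).Nonempty) ∧
  ∀ g : G, Filter.Tendsto
    (fun n => (((F n) \ (F n).image (· * g)).card : ℝ) / ((F n).card : ℝ))
    Filter.atTop (nhds 0)

/-!
Left multiplication commutes with right translation, so a finite set `A` satisfies
`A * F \ A * F * g ⊆ A * (F \ F * g)`: replacing `F` by `A * F` multiplies the Følner ratio by at
most `|A|`. Since the ratio of `F` can be taken small compared to `1 / |A|`, and `A ⊆ A * f⁻¹ * F`
for any `f ∈ F`, every finite set is contained in an arbitrarily invariant one. An exhaustion then
arises recursively, each term absorbing the previous one and the next element of an enumeration.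
Such an enumeration always exists: `F` meets `F * g` only if `g ∈ F⁻¹ * F`, so the countably many
finite sets `F_n⁻¹ * F_n` cover `G`.
-/

section

open Filter Finset
open scoped Pointwise

lemma mul_sdiff_image_mul_right_subset {S : Type*} [Semigroup S] (A E : Finset S) (g : S) :
    (A * E) \ (A * E).image (· * g) ⊆ A * (E \ E.image (· * g)) := by
  intro x hx
  obtain ⟨hxAE, hxg⟩ := mem_sdiff.1 hx
  obtain ⟨a, ha, y, hy, rfl⟩ := mem_mul.1 hxAE
  refine mul_mem_mul ha (mem_sdiff.2 ⟨hy, fun hyg ↦ hxg ?_⟩)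
  obtain ⟨z, hz, rfl⟩ := mem_image.1 hyg
  exact mem_image.2 ⟨a * z, mul_mem_mul ha hz, mul_assoc a z g⟩

variable {G : Type*} [Group G]

/-- The proportion of `E` lying outside its right translate `E * g`; it is `0` for empty `E`. -/
noncomputable def folnerRatio (E : Finset G) (g : G) : ℝ :=
  (#(E \ E.image (· * g)) : ℝ) / #E

/-- A Følner sequence of increasing sets, the first containing `1`, that exhaust `G`. -/
def IsFolnerExhaustion (F : ℕ → Finset G) : Prop :=
  IsFolnerSequence F ∧ (1 : G) ∈ F 0 ∧ (∀ n, F n ⊆ F (n + 1)) ∧ ∀ g : G, ∃ n, g ∈ F n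

variable (G) in
/-- The Følner condition on `G`: some nonempty finite set is almost invariant, to any prescribed
precision, under any prescribed finite set of right translations. -/
def FolnerCondition : Prop :=
  ∀ (K : Finset G) (ε : ℝ), 0 < ε → ∃ E : Finset G, E.Nonempty ∧ ∀ g ∈ K, folnerRatio E g < ε

lemma folnerRatio_nonneg (E : Finset G) (g : G) : 0 ≤ folnerRatio E g := by
  unfold folnerRatio
  positivity

lemma folnerRatio_mul_le {A E : Finset G} (hA : A.Nonempty) (hE : E.Nonempty) (g : G) :
    folnerRatio (A * E) g ≤ #A * folnerRatio E g := by
  have hcard : #((A * E) \ (A * E).image (· * g)) ≤ #A * #(E \ E.image (· * g)) :=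
    (card_le_card (mul_sdiff_image_mul_right_subset A E g)).trans card_mul_le
  rw [folnerRatio, folnerRatio, ← mul_div_assoc]
  exact div_le_div₀ (by positivity) (mod_cast hcard) (mod_cast hE.card_pos)
    (mod_cast card_le_card_mul_left hA)

lemma mem_inv_mul_of_folnerRatio_lt_one {E : Finset G} (hE : E.Nonempty) {g : G}
    (hg : folnerRatio E g < 1) : g ∈ E⁻¹ * E := by
  have hmeet : ¬ Disjoint E (E.image (· * g)) := fun hdisj ↦ by
    rw [folnerRatio, sdiff_eq_self_of_disjoint hdisj, div_self (by simpa using hE.ne_empty)] at hg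
    exact lt_irrefl 1 hg
  obtain ⟨x, hx, hxg⟩ := not_disjoint_iff.1 hmeet
  obtain ⟨y, hy, rfl⟩ := mem_image.1 hxg
  exact mem_mul.2 ⟨y⁻¹, inv_mem_inv hy, y * g, hx, inv_mul_cancel_left y g⟩

theorem IsFolnerSequence.countable {F : ℕ → Finset G} (hF : IsFolnerSequence F) :
    Countable G := by
  have hcover : (⋃ n, (((F n)⁻¹ * F n : Finset G) : Set G)) = Set.univ := by
    refine Set.eq_univ_of_forall fun g ↦ Set.mem_iUnion.2 ?_
    obtain ⟨n, hn⟩ := ((hF.2 g).eventually_lt_const one_pos).exists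
    exact ⟨n, mem_inv_mul_of_folnerRatio_lt_one (hF.1 n) hn⟩
  rw [← Set.countable_univ_iff, ← hcover]
  exact Set.countable_iUnion fun n ↦ Finset.countable_toSet _

theorem IsFolnerSequence.folnerCondition {F : ℕ → Finset G} (hF : IsFolnerSequence F) :
    FolnerCondition G := by
  intro K ε hε
  have hsmall : ∀ᶠ n in atTop, ∀ g ∈ K, folnerRatio (F n) g < ε :=
    (eventually_all_finset K).2 fun g _ ↦ (hF.2 g).eventually_lt_const hε
  obtain ⟨n, hn⟩ := hsmall.exists
  exact ⟨F n, hF.1 n, hn⟩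

namespace FolnerCondition

theorem exists_superset (hG : FolnerCondition G) (A K : Finset G) {ε : ℝ} (hε : 0 < ε) :
    ∃ E : Finset G, A ⊆ E ∧ ∀ g ∈ K, folnerRatio E g < ε := by
  obtain rfl | hA := A.eq_empty_or_nonempty
  · obtain ⟨E, -, hE⟩ := hG K ε hε
    exact ⟨E, empty_subset E, hE⟩
  have hA_pos : (0 : ℝ) < #A := by exact_mod_cast hA.card_pos
  obtain ⟨E, ⟨x, hx⟩, hE⟩ := hG K (ε / #A) (by positivity)
  refine ⟨A * {x⁻¹} * E, fun a ha ↦ ?_, fun g hg ↦ ?_⟩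
  · simpa using mul_mem_mul (mul_mem_mul ha (mem_singleton_self x⁻¹)) hx
  · calc folnerRatio (A * {x⁻¹} * E) g
        ≤ #(A * {x⁻¹}) * folnerRatio E g :=
          folnerRatio_mul_le (hA.mul (singleton_nonempty _)) ⟨x, hx⟩ g
      _ = #A * folnerRatio E g := by rw [card_mul_singleton]
      _ < ε := (lt_div_iff₀' hA_pos).1 (hE g hg)

theorem exists_isFolnerExhaustion [Countable G] (hG : FolnerCondition G) :
    ∃ F : ℕ → Finset G, IsFolnerExhaustion F := by
  obtain ⟨e, he⟩ := exists_surjective_nat G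
  choose next subset_next ratio_next using fun (n : ℕ) (A : Finset G) ↦
    hG.exists_superset (insert (e n) A) ((range (n + 1)).image e)
      (Nat.one_div_pos_of_nat (α := ℝ) (n := n))
  let F : ℕ → Finset G := fun n ↦ Nat.rec {1} next n
  have hmono (n : ℕ) : F n ⊆ F (n + 1) := (subset_insert _ _).trans (subset_next n (F n))
  have hone (n : ℕ) : 1 ∈ F n :=
    monotone_nat_of_le_succ hmono n.zero_le (mem_singleton_self (1 : G))
  have htendsto (g : G) : Tendsto (fun n ↦ folnerRatio (F n) g) atTop (nhds 0) := by
    obtain ⟨i, rfl⟩ := he g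
    rw [← tendsto_add_atTop_iff_nat 1]
    refine squeeze_zero' (.of_forall fun _ ↦ folnerRatio_nonneg _ _) ?_
      tendsto_one_div_add_atTop_nhds_zero_nat
    filter_upwards [eventually_ge_atTop i] with n hn
    exact (ratio_next n (F n) (e i)
      (mem_image_of_mem e (mem_range.2 (Nat.lt_succ_of_le hn)))).le
  have hcover (g : G) : ∃ n, g ∈ F n := by
    obtain ⟨i, rfl⟩ := he g
    exact ⟨i + 1, subset_next i (F i) (mem_insert_self _ _)⟩
  exact ⟨F, ⟨fun n ↦ ⟨1, hone n⟩, htendsto⟩, hone 0, hmono, hcover⟩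

end FolnerCondition

end

theorem exists_folnerSequence_iff_exists_folnerExhaustion_general (G : Type*) [Group G] :
    (∃ F : ℕ → Finset G, IsFolnerSequence F) ↔ ∃ F : ℕ → Finset G, IsFolnerExhaustion F := by
  refine ⟨fun ⟨F, hF⟩ ↦ ?_, fun ⟨F, hF⟩ ↦ ⟨F, hF.1⟩⟩
  have := hF.countable
  exact hF.folnerCondition.exists_isFolnerExhaustion

/-- A countable group has a Følner sequence if and only if it has a Følner exhaustion:
a Følner sequence `(F_n)` with `1 ∈ F_0 ⊆ F_1 ⊆ ⋯` and `G = ⋃_n F_n`. -/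
theorem exists_folnerSequence_iff_exists_folnerExhaustion
    (G : Type*) [Group G] [Countable G] :
    (∃ F : ℕ → Finset G, IsFolnerSequence F) ↔
    (∃ F : ℕ → Finset G, IsFolnerSequence F ∧ (1 : G) ∈ F 0 ∧
      (∀ n, F n ⊆ F (n + 1)) ∧ (∀ g : G, ∃ n, g ∈ F n)) :=
  exists_folnerSequence_iff_exists_folnerExhaustion_general G
end

section
/- There exists a countable subset X of the unit sphere 𝕊² in ℝ³ such that 𝕊² \ X is SO(3)-paradoxical with respect to the natural action of SO(3) on ℝ³ (Hausdorff Paradox). -/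
/-- A subset `E` of a right `G`-set `Ω` (with action `act`) is `G`-paradoxical:
there are pairwise disjoint subsets `X₁,…,Xₙ, Y₁,…,Yₘ` of `E` and group elements
`g₁,…,gₙ, h₁,…,hₘ` such that `E = (⨆ Xᵢ) ⊔ (⨆ Yⱼ) = ⨆ Xᵢgᵢ = ⨆ Yⱼhⱼ`,
all indicated unions being disjoint. -/
def IsParadoxical {G Ω : Type*} [Group G] (act : Ω → G → Ω) (E : Set Ω) : Prop :=
  ∃ (n m : ℕ) (X : Fin n → Set Ω) (Y : Fin m → Set Ω) (g : Fin n → G) (h : Fin m → G),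
    (∀ i, X i ⊆ E) ∧ (∀ j, Y j ⊆ E) ∧
    (∀ i j, i ≠ j → Disjoint (X i) (X j)) ∧
    (∀ i j, i ≠ j → Disjoint (Y i) (Y j)) ∧
    (∀ i j, Disjoint (X i) (Y j)) ∧
    E = ((⋃ i, X i) ∪ ⋃ j, Y j) ∧
    E = (⋃ i, (fun x => act x (g i)) '' X i) ∧
    E = (⋃ j, (fun x => act x (h j)) '' Y j) ∧
    (∀ i j, i ≠ j →
      Disjoint ((fun x => act x (g i)) '' X i) ((fun x => act x (g j)) '' X j)) ∧
    (∀ i j, i ≠ j →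
      Disjoint ((fun x => act x (h i)) '' Y i) ((fun x => act x (h j)) '' Y j))

/-- `SO(3)`: the subgroup of the orthogonal group `O(3)` of matrices of determinant `1`. -/
def SO3 : Subgroup (Matrix.orthogonalGroup (Fin 3) ℝ) where
  carrier := {A | ((A : Matrix (Fin 3) (Fin 3) ℝ)).det = 1}
  one_mem' := by simp
  mul_mem' := by
    intro a b ha hb
    simp only [Set.mem_setOf_eq, Matrix.UnitaryGroup.mul_val, Matrix.det_mul] at *
    rw [ha, hb, mul_one]
  inv_mem' := by
    intro a ha
    simp only [Set.mem_setOf_eq, Matrix.UnitaryGroup.inv_val] at *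
    rw [Matrix.star_eq_conjTranspose, Matrix.det_conjTranspose, ha, star_one]

/-- The natural (right) action of `SO(3)` on `ℝ³` by matrix multiplication. -/
def so3Act (v : Fin 3 → ℝ) (A : SO3) : Fin 3 → ℝ :=
  Matrix.vecMul v (A : Matrix (Fin 3) (Fin 3) ℝ)

/-- The unit sphere `𝕊²` centred at the origin in `ℝ³`. -/
def unitSphere : Set (Fin 3 → ℝ) :=
  {v | v 0 ^ 2 + v 1 ^ 2 + v 2 ^ 2 = 1}

/-!
Two rotations of angle `arccos (3 / 5)` about orthogonal axes generate a free group: after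
multiplication by `5` the matrices of the generators and of their inverses are integral, and modulo
`5` they have rank one, with column and row vectors such that a product over a reduced word is a
nonzero rank-one matrix, whereas `5 ^ n` times the identity vanishes for `0 < n`.

A countable group of rotations acts freely on the sphere away from a countable set, because a
nontrivial rotation fixes at most two unit vectors. Where the action is free there is an equivariant
map to the group, and along it a paradoxical decomposition of the free group pulls back to the
sphere minus that set.
-/

open Set MulAction
open scoped Pointwise

section Paradoxical

theorem IsParadoxical.reindex {Ω G H : Type*} [Group G] [Group H] {act : Ω → G → Ω}
    {act' : Ω → H → Ω} {E : Set Ω} (hE : IsParadoxical act E) (φ : G → H)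
    (hφ : ∀ x g, act' x (φ g) = act x g) : IsParadoxical act' E := by
  obtain ⟨n, m, X, Y, g, h, hE⟩ := hE
  exact ⟨n, m, X, Y, φ ∘ g, φ ∘ h, by simpa only [Function.comp_apply, hφ] using hE⟩

variable {G Ω Ω' : Type*} [Group G] [MulAction G Ω] [MulAction G Ω']

theorem IsParadoxical.inter_preimage {E : Set Ω} {E' : Set Ω'} {π : Ω → Ω'}
    (hE' : IsParadoxical (fun (x : Ω') (g : G) => g • x) E') (hπE : MapsTo π E E')
    (hE : ∀ g : G, ∀ x ∈ E, g • x ∈ E) (hπ : ∀ g : G, ∀ x ∈ E, π (g • x) = g • π x) :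
    IsParadoxical (fun (x : Ω) (g : G) => g • x) E := by
  have himage (g : G) (S : Set Ω') :
      (fun x => g • x) '' (E ∩ π ⁻¹' S) = E ∩ π ⁻¹' ((fun x => g • x) '' S) := by
    ext y
    constructor
    · rintro ⟨x, ⟨hx, hxS⟩, rfl⟩
      exact ⟨hE g x hx, π x, hxS, (hπ g x hx).symm⟩
    · rintro ⟨hy, z, hz, hzy⟩
      have hπy : π (g⁻¹ • y) = z := by rw [hπ _ _ hy, ← hzy, inv_smul_smul]
      exact ⟨g⁻¹ • y, ⟨hE _ y hy, by rwa [mem_preimage, hπy]⟩, smul_inv_smul g y⟩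
  have hinter {S : Set Ω'} (hS : E' = S) : E = E ∩ π ⁻¹' S :=
    (inter_eq_left.2 fun x hx => mem_preimage.2 (hS ▸ hπE hx)).symm
  have hdisj {S T : Set Ω'} (hST : Disjoint S T) : Disjoint (E ∩ π ⁻¹' S) (E ∩ π ⁻¹' T) :=
    (hST.preimage π).mono inter_subset_right inter_subset_right
  obtain ⟨n, m, X, Y, g, h, -, -, hX, hY, hXY, hE'XY, hE'X, hE'Y, hgX, hhY⟩ := hE'
  refine ⟨n, m, fun i => E ∩ π ⁻¹' X i, fun j => E ∩ π ⁻¹' Y j, g, h,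
    fun _ => inter_subset_left, fun _ => inter_subset_left,
    fun i j hij => hdisj (hX i j hij), fun i j hij => hdisj (hY i j hij),
    fun i j => hdisj (hXY i j), ?_, ?_, ?_, fun i j hij => ?_, fun i j hij => ?_⟩
  · simpa only [preimage_union, preimage_iUnion, inter_union_distrib_left, inter_iUnion]
      using hinter hE'XY
  · simpa only [himage, preimage_iUnion, inter_iUnion] using hinter hE'X
  · simpa only [himage, preimage_iUnion, inter_iUnion] using hinter hE'Y
  · simpa only [himage] using hdisj (hgX i j hij)
  · simpa only [himage] using hdisj (hhY i j hij)

theorem exists_equivariant_of_stabilizer_eq_bot (G Ω : Type*) [Group G] [MulAction G Ω] :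
    ∃ π : Ω → G, ∀ x, stabilizer G x = ⊥ → ∀ g : G, π (g • x) = g • π x := by
  let base (x : Ω) : Ω := (Quotient.mk (orbitRel G Ω) x).out
  have hbase (x : Ω) : ∃ g : G, g • base x = x :=
    (orbitRel G Ω).symm (Quotient.mk_out (s := orbitRel G Ω) x)
  choose π hπ using hbase
  refine ⟨π, fun x hx g => ?_⟩
  have hbase_smul : base (g • x) = base x :=
    congrArg Quotient.out (Quotient.sound (s := orbitRel G Ω) ⟨g, rfl⟩)
  have hfix : g⁻¹ * (π (g • x) * (π x)⁻¹) ∈ stabilizer G x := by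
    have hx' : (π x)⁻¹ • x = base x := inv_smul_eq_iff.2 (hπ x).symm
    rw [mem_stabilizer_iff, mul_smul, mul_smul, hx', ← hbase_smul, hπ, inv_smul_smul]
  rw [hx, Subgroup.mem_bot, inv_mul_eq_one] at hfix
  exact (eq_mul_inv_iff_mul_eq.1 hfix).symm

theorem IsParadoxical.setOf_stabilizer_eq_bot
    (hG : IsParadoxical (fun (x : G) (g : G) => g • x) univ) {S : Set Ω}
    (hS : ∀ g : G, ∀ x ∈ S, g • x ∈ S) :
    IsParadoxical (fun (x : Ω) (g : G) => g • x) {x ∈ S | stabilizer G x = ⊥} := by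
  obtain ⟨π, hπ⟩ := exists_equivariant_of_stabilizer_eq_bot G Ω
  refine hG.inter_preimage (mapsTo_univ π _) (fun g x hx => ⟨hS g x hx.1, ?_⟩)
    fun g x hx => hπ x hx.2 g
  rw [stabilizer_smul_eq_stabilizer_map_conj, hx.2, Subgroup.map_bot]

theorem countable_setOf_stabilizer_ne_bot [Countable G] {S : Set Ω}
    (hS : ∀ g : G, g ≠ 1 → (S ∩ fixedBy Ω g).Countable) :
    {x ∈ S | stabilizer G x ≠ ⊥}.Countable := by
  refine (countable_iUnion fun g : {g : G // g ≠ 1} => hS g g.2).mono ?_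
  rintro x ⟨hxS, hx⟩
  obtain ⟨⟨g, hgx⟩, hg⟩ := Subgroup.ne_bot_iff_exists_ne_one.1 hx
  exact mem_iUnion.2 ⟨⟨g, by simpa using hg⟩, hxS, hgx⟩

theorem exists_countable_isParadoxical_diff [Countable G]
    (hG : IsParadoxical (fun (x : G) (g : G) => g • x) univ) {S : Set Ω}
    (hS : ∀ g : G, ∀ x ∈ S, g • x ∈ S)
    (hfix : ∀ g : G, g ≠ 1 → (S ∩ fixedBy Ω g).Countable) :
    ∃ X ⊆ S, X.Countable ∧ IsParadoxical (fun (x : Ω) (g : G) => g • x) (S \ X) := by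
  refine ⟨{x ∈ S | stabilizer G x ≠ ⊥}, sep_subset _ _,
    countable_setOf_stabilizer_ne_bot hfix, ?_⟩
  simpa only [sdiff_sep_self, not_not] using hG.setOf_stabilizer_eq_bot hS

theorem iUnion_fin_two (s : Fin 2 → Set Ω) : ⋃ i, s i = s 0 ∪ s 1 := by
  ext; simp [Fin.exists_fin_two]

theorem isParadoxical_univ_of_smul_compl {A₁ A₂ B₁ B₂ : Set Ω} {a b : G}
    (hAB : IsCompl (A₁ ∪ A₂) (B₁ ∪ B₂)) (hA : Disjoint A₁ A₂) (hB : Disjoint B₁ B₂)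
    (ha : a • A₂ᶜ = A₁) (hb : b • B₂ᶜ = B₁) :
    IsParadoxical (fun (x : Ω) (g : G) => g • x) univ := by
  have ha' : a⁻¹ • A₁ = A₂ᶜ := by rw [← ha, inv_smul_smul]
  have hb' : b⁻¹ • B₁ = B₂ᶜ := by rw [← hb, inv_smul_smul]
  have hcover : A₁ ∪ A₂ ∪ (B₁ ∪ B₂) = univ := hAB.sup_eq_top
  have hdisj := hAB.disjoint
  simp only [disjoint_union_left, disjoint_union_right] at hdisj
  refine ⟨2, 2, ![A₁, A₂], ![B₁, B₂], ![a⁻¹, 1], ![b⁻¹, 1], ?_⟩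
  simp [Fin.forall_fin_two, iUnion_fin_two, hcover, ha', hb', hA, hB, hA.symm, hB.symm, hdisj,
    disjoint_compl_left, disjoint_compl_right]

end Paradoxical

section FreeGroup

open FreeGroup (of mk startsWith)

variable {α : Type*}

/-- The set `{1, a⁻¹, a⁻², …}` of nonpositive powers of the generator `a`. Left multiplication by
`a` adds only `a` itself to it, so it can be moved from the words starting with `a⁻¹` to those
starting with `a` in order to place the identity in a paradoxical decomposition. -/
def invPowers (a : α) : Set (FreeGroup α) := range fun n : ℕ => (of a)⁻¹ ^ n

theorem of_smul_invPowers (a : α) : of a • invPowers a = insert (of a) (invPowers a) := by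
  rw [invPowers, ← image_smul, ← range_comp, ← Nat.range_of_succ]
  simp only [Function.comp_def, pow_succ', smul_eq_mul, mul_inv_cancel_left, pow_zero, mul_one,
    singleton_union]

variable [DecidableEq α]

theorem mk_smul_compl_startsWith (l : α × Bool) :
    mk [l] • (startsWith (l.1, !l.2))ᶜ = startsWith l := by
  refine Subset.antisymm
    (smul_set_subset_iff.2 fun w hw => FreeGroup.startsWith_mk_mul w hw) fun w hw => ?_
  obtain ⟨L, hL⟩ : ∃ L, w.toWord = l :: L := by
    cases h : w.toWord <;> grind [startsWith]
  have hred : FreeGroup.IsReduced (l :: L) := hL ▸ FreeGroup.isReduced_toWord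
  have htail : L[0]? ≠ some (l.1, !l.2) := by
    cases L <;> grind [FreeGroup.isReduced_cons_cons]
  refine ⟨mk L, ?_, by simp [← hL, FreeGroup.mk_toWord]⟩
  have hL' : (mk L).toWord = L := (hred.infix (List.infix_cons List.infix_rfl)).reduce_eq
  simpa [startsWith, hL'] using htail

theorem invPowers_subset_insert_startsWith (a : α) :
    invPowers a ⊆ insert 1 (startsWith (a, false)) := by
  rintro _ ⟨n, rfl⟩
  cases n with
  | zero => simp
  | succ n => simp [inv_pow, startsWith, FreeGroup.toWord_inv, FreeGroup.invRev]

theorem compl_union_startsWith_false :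
    (startsWith (false, true) ∪ startsWith (false, false))ᶜ =
      insert 1 (startsWith (true, true) ∪ startsWith (true, false)) := by
  ext w
  rcases hw : w.toWord with - | ⟨⟨_ | _, _ | _⟩, L⟩ <;>
    simp [startsWith, ← FreeGroup.toWord_eq_nil_iff, hw]

theorem isParadoxical_freeGroup_bool :
    IsParadoxical (fun w g : FreeGroup Bool => g • w) univ := by
  have hpow := invPowers_subset_insert_startsWith true
  have hof : of true ∈ startsWith (true, true) := by simp [startsWith]
  refine isParadoxical_univ_of_smul_compl
    (A₁ := startsWith (true, true) ∪ invPowers true)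
    (A₂ := startsWith (true, false) \ invPowers true)
    (B₁ := startsWith (false, true)) (B₂ := startsWith (false, false))
    (a := of true) (b := of false) ?_ ?_ (by simp) ?_ (mk_smul_compl_startsWith (false, true))
  · have hone : 1 ∈ invPowers true := ⟨0, pow_zero _⟩
    rw [← eq_compl_iff_isCompl, compl_union_startsWith_false, union_assoc, union_sdiff_self]
    grind
  · rw [disjoint_union_left]
    exact ⟨Disjoint.mono_right sdiff_subset (by simp), disjoint_sdiff_right⟩
  · calc of true • (startsWith (true, false) \ invPowers true)ᶜ
        = of true • (startsWith (true, false))ᶜ ∪ of true • invPowers true := by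
          rw [compl_sdiff, smul_set_union, union_comm]
      _ = startsWith (true, true) ∪ insert (of true) (invPowers true) := by
          rw [of_smul_invPowers]
          exact congrArg (· ∪ _) (mk_smul_compl_startsWith (true, true))
      _ = startsWith (true, true) ∪ invPowers true := by
          rw [union_insert, insert_eq_of_mem (mem_union_left _ hof)]

end FreeGroup

open Matrix

section Rotations

section CommRing

variable {R : Type*} [CommRing R]

theorem transpose_mulVec_cross (A : Matrix (Fin 3) (Fin 3) R) (v w : Fin 3 → R) :
    Aᵀ *ᵥ ((A *ᵥ v) ⨯₃ (A *ᵥ w)) = A.det • (v ⨯₃ w) := by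
  ext i
  fin_cases i <;>
    simp [det_fin_three, cross_apply, mulVec, dotProduct, Fin.sum_univ_three] <;> ring

theorem mulVec_cross_of_mem_specialOrthogonalGroup {A : Matrix (Fin 3) (Fin 3) R}
    (hA : A ∈ specialOrthogonalGroup (Fin 3) R) (v w : Fin 3 → R) :
    A *ᵥ (v ⨯₃ w) = (A *ᵥ v) ⨯₃ (A *ᵥ w) := by
  have hAAt : A * Aᵀ = 1 := (mem_orthogonalGroup_iff (Fin 3) R).1 hA.1
  have hdet : A.det = 1 := hA.2
  have h := congrArg (A *ᵥ ·) (transpose_mulVec_cross A v w)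
  simpa [hAAt, hdet] using h.symm

theorem eq_or_eq_neg_of_cross_eq_zero [NoZeroDivisors R] {v w : Fin 3 → R}
    (hv : v ⬝ᵥ v = 1) (hw : w ⬝ᵥ w = 1) (hvw : v ⨯₃ w = 0) : v = w ∨ v = -w := by
  have hcol : v = (v ⬝ᵥ w) • w := by
    have h := cross_cross_eq_smul_sub_smul v w w
    rw [hvw, map_zero, LinearMap.zero_apply, hw, one_smul] at h
    exact (sub_eq_zero.1 h.symm).symm
  have hsq : (v ⬝ᵥ w) * (v ⬝ᵥ w) = 1 := by
    have h := cross_dot_cross v w v w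
    rw [hvw, zero_dotProduct, hv, hw, dotProduct_comm w v, one_mul] at h
    exact (sub_eq_zero.1 h.symm).symm
  rcases mul_self_eq_one_iff.1 hsq with h | h
  · exact .inl (by rwa [h, one_smul] at hcol)
  · exact .inr (by rwa [h, neg_one_smul] at hcol)

end CommRing

theorem eq_one_of_mulVec_eq_self {K : Type*} [Field K] [LinearOrder K] [IsStrictOrderedRing K]
    {A : Matrix (Fin 3) (Fin 3) K} (hA : A ∈ specialOrthogonalGroup (Fin 3) K)
    {v w : Fin 3 → K} (hvw : v ⨯₃ w ≠ 0) (hv : A *ᵥ v = v) (hw : A *ᵥ w = w) : A = 1 := by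
  let M : Matrix (Fin 3) (Fin 3) K := of ![v ⨯₃ w, v, w]
  have hM : IsUnit M := by
    rw [isUnit_iff_isUnit_det, isUnit_iff_ne_zero]
    exact triple_product_eq_det (v ⨯₃ w) v w ▸ dotProduct_self_eq_zero.not.2 hvw
  have hMA : M * Aᵀ = M * 1 := by
    rw [mul_one]
    refine ext_row fun i => ?_
    fin_cases i <;>
      simp [M, vecMul_transpose, hv, hw, mulVec_cross_of_mem_specialOrthogonalGroup hA]
  exact transpose_eq_one.1 (hM.mul_left_cancel hMA)

theorem mem_unitSphere_iff {v : Fin 3 → ℝ} : v ∈ unitSphere ↔ v ⬝ᵥ v = 1 := by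
  simp [unitSphere, dotProduct, Fin.sum_univ_three, sq]

namespace SO3

/-- The inclusion of `SO(3)` into the monoid of real `3 × 3` matrices. -/
def toMatrix : SO3 →* Matrix (Fin 3) (Fin 3) ℝ :=
  (orthogonalGroup (Fin 3) ℝ).subtype.comp SO3.subtype

theorem toMatrix_injective : Function.Injective toMatrix :=
  Subtype.val_injective.comp Subtype.val_injective

theorem toMatrix_mem_specialOrthogonalGroup (A : SO3) :
    toMatrix A ∈ specialOrthogonalGroup (Fin 3) ℝ :=
  ⟨A.1.2, A.2⟩

theorem toMatrix_inv (A : SO3) : toMatrix A⁻¹ = (toMatrix A)ᵀ := rfl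

-- A shortcut: the general search for this instance times out.
noncomputable instance : SMul SO3 (Fin 3 → ℝ) := Subgroup.instMulAction.toSMul

theorem smul_def (A : SO3) (v : Fin 3 → ℝ) : A • v = toMatrix A *ᵥ v := rfl

theorem so3Act_inv (v : Fin 3 → ℝ) (A : SO3) : so3Act v A⁻¹ = A • v :=
  vecMul_transpose (toMatrix A) v

theorem smul_mem_unitSphere (A : SO3) {v : Fin 3 → ℝ} (hv : v ∈ unitSphere) :
    A • v ∈ unitSphere := by
  have hA : (toMatrix A)ᵀ * toMatrix A = 1 :=
    (mem_orthogonalGroup_iff' (Fin 3) ℝ).1 (toMatrix_mem_specialOrthogonalGroup A).1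
  rw [mem_unitSphere_iff] at hv ⊢
  rw [smul_def, dotProduct_mulVec, ← mulVec_transpose, mulVec_mulVec, hA, one_mulVec, hv]

theorem finite_unitSphere_inter_fixedBy {A : SO3} (hA : A ≠ 1) :
    (unitSphere ∩ fixedBy (Fin 3 → ℝ) A).Finite := by
  rcases eq_empty_or_nonempty (unitSphere ∩ fixedBy (Fin 3 → ℝ) A) with h | ⟨v, hv, hAv⟩
  · exact h ▸ finite_empty
  refine (toFinite {v, -v}).subset fun w ⟨hw, hAw⟩ => ?_
  rw [mem_unitSphere_iff] at hv hw
  refine eq_or_eq_neg_of_cross_eq_zero hw hv (by_contra fun hwv => hA (toMatrix_injective ?_))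
  rw [map_one]
  exact eq_one_of_mulVec_eq_self (toMatrix_mem_specialOrthogonalGroup A) hwv hAw hAv

end SO3

end Rotations

section RankOne

variable {ι n K : Type*} [Fintype n] [DecidableEq n] [CommRing K] [NoZeroDivisors K]

theorem prod_map_vecMulVec_ne_zero {c r : ι → n → K} (hc : ∀ i, c i ≠ 0) (hr : ∀ i, r i ≠ 0)
    {L : List ι} (hL : L.IsChain fun i j => r i ⬝ᵥ c j ≠ 0) (hL₀ : L ≠ []) :
    (L.map fun i => vecMulVec (c i) (r i)).prod ≠ 0 := by
  have hprod (i : ι) (L : List ι) (hL : (i :: L).IsChain fun i j => r i ⬝ᵥ c j ≠ 0) :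
      ∃ w ≠ 0, ((i :: L).map fun i => vecMulVec (c i) (r i)).prod = vecMulVec (c i) w := by
    induction L generalizing i with
    | nil => exact ⟨r i, hr i, by simp⟩
    | cons j L ih =>
      obtain ⟨hij, hL⟩ := List.isChain_cons_cons.1 hL
      obtain ⟨w, hw, hprod⟩ := ih j hL
      refine ⟨(r i ⬝ᵥ c j) • w, smul_ne_zero hij hw, ?_⟩
      rw [List.map_cons, List.prod_cons, hprod, vecMulVec_mul_vecMulVec]
  obtain ⟨i, L, rfl⟩ := List.exists_cons_of_ne_nil hL₀
  obtain ⟨w, hw, hprod⟩ := hprod i L hL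
  rw [hprod]
  exact vecMulVec_ne_zero (hc i) hw

end RankOne

theorem inv_smul_map_mem_specialOrthogonalGroup {n R K : Type*} [Fintype n] [DecidableEq n]
    [CommRing R] [Field K] (f : R →+* K) {Z : Matrix n n R} {d : R} (hd : f d ≠ 0)
    (hZ : Z * Zᵀ = d ^ 2 • 1) (hdet : Z.det = d ^ Fintype.card n) :
    (f d)⁻¹ • f.mapMatrix Z ∈ specialOrthogonalGroup n K := by
  have hmap : f.mapMatrix Z * (f.mapMatrix Z)ᵀ = f d ^ 2 • 1 := by
    have h := congrArg f.mapMatrix hZ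
    simpa [Matrix.map_mul, transpose_map, smul_one_eq_diagonal, diagonal_map] using h
  rw [mem_specialOrthogonalGroup_iff, mem_orthogonalGroup_iff, det_smul, ← RingHom.map_det, hdet]
  refine ⟨?_, ?_⟩
  · rw [transpose_smul, smul_mul_smul_comm, hmap, smul_smul]
    simp [← sq, hd]
  · rw [map_pow, ← mul_pow, inv_mul_cancel₀ hd, one_pow]

section FreeRotations

/-- Five times the matrix of a rotation by the angle `arccos (3 / 5)`, about the third coordinate
axis for `true` and about the first one for `false`. -/
def scaledRotation : Bool → Matrix (Fin 3) (Fin 3) ℤ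
  | true => !![3, 4, 0; -4, 3, 0; 0, 0, 5]
  | false => !![5, 0, 0; 0, 3, 4; 0, -4, 3]

theorem scaledRotation_mul_transpose (b : Bool) :
    scaledRotation b * (scaledRotation b)ᵀ = (5 ^ 2 : ℤ) • 1 := by
  revert b; decide

theorem det_scaledRotation (b : Bool) : (scaledRotation b).det = 5 ^ 3 := by
  revert b; decide

/-- The rotation by the angle `arccos (3 / 5)` about the third (`true`) or the first (`false`)
coordinate axis. -/
noncomputable def axisRotation (b : Bool) : SO3 :=
  have h : (5 : ℝ)⁻¹ • (Int.castRingHom ℝ).mapMatrix (scaledRotation b) ∈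
      specialOrthogonalGroup (Fin 3) ℝ :=
    inv_smul_map_mem_specialOrthogonalGroup (Int.castRingHom ℝ) (d := 5) (by simp)
      (scaledRotation_mul_transpose b) (det_scaledRotation b)
  ⟨⟨_, h.1⟩, h.2⟩

theorem five_smul_toMatrix_axisRotation (b : Bool) :
    (5 : ℝ) • SO3.toMatrix (axisRotation b) =
      (Int.castRingHom ℝ).mapMatrix (scaledRotation b) :=
  smul_inv_smul₀ (by norm_num) _

/-- The action of the free group on two generators on `ℝ³` by rotations, sending the generators to
`axisRotation true` and `axisRotation false`. -/
noncomputable def freeRotations : FreeGroup Bool →* SO3 := FreeGroup.lift axisRotation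

/-- Five times the matrix of the rotation given by a letter of a word in the free group: the letter
`(b, true)` is the generator `b` and `(b, false)` is its inverse. -/
def letterMatrix (l : Bool × Bool) : Matrix (Fin 3) (Fin 3) ℤ :=
  cond l.2 (scaledRotation l.1) (scaledRotation l.1)ᵀ

theorem five_smul_toMatrix_letter (l : Bool × Bool) :
    (5 : ℝ) • SO3.toMatrix (cond l.2 (axisRotation l.1) (axisRotation l.1)⁻¹) =
      (Int.castRingHom ℝ).mapMatrix (letterMatrix l) := by
  obtain ⟨b, _ | _⟩ := l
  · rw [cond_false, SO3.toMatrix_inv, ← transpose_smul, five_smul_toMatrix_axisRotation]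
    exact transpose_map
  · exact five_smul_toMatrix_axisRotation b

theorem five_pow_smul_toMatrix_freeRotations (w : FreeGroup Bool) :
    (5 : ℝ) ^ w.toWord.length • SO3.toMatrix (freeRotations w) =
      (Int.castRingHom ℝ).mapMatrix (w.toWord.map letterMatrix).prod := by
  have hw : freeRotations w =
      (w.toWord.map fun l => cond l.2 (axisRotation l.1) (axisRotation l.1)⁻¹).prod := by
    conv_lhs => rw [← FreeGroup.mk_toWord (x := w)]
    exact FreeGroup.lift_mk
  rw [hw, map_list_prod, map_list_prod, List.map_map, List.map_map, ← List.length_map,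
    List.smul_prod, List.map_map]
  exact congrArg List.prod (List.map_congr_left fun l _ => five_smul_toMatrix_letter l)

/-- Isotropic vectors over `𝔽₅` attached to the letters of the free group. Modulo `5` the matrix of
a letter has rank one; `isotropicVec` of the letter spans its column space and `isotropicVec` of the
inverse letter spans its row space. -/
def isotropicVec : Bool × Bool → Fin 3 → ZMod 5
  | (true, true) => ![3, 1, 0]
  | (true, false) => ![1, 3, 0]
  | (false, true) => ![0, 3, 1]
  | (false, false) => ![0, 1, 3]

theorem mapMatrix_letterMatrix (l : Bool × Bool) :
    (Int.castRingHom (ZMod 5)).mapMatrix (letterMatrix l) =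
      vecMulVec (isotropicVec l) (isotropicVec (l.1, !l.2)) := by
  revert l; decide

theorem isotropicVec_ne_zero (l : Bool × Bool) : isotropicVec l ≠ 0 := by
  revert l; decide

theorem isotropicVec_dotProduct_ne_zero {l l' : Bool × Bool} (h : l.1 = l'.1 → l.2 = l'.2) :
    isotropicVec (l.1, !l.2) ⬝ᵥ isotropicVec l' ≠ 0 := by
  revert l l'; decide

theorem mapMatrix_prod_letterMatrix_ne_zero {w : FreeGroup Bool} (hw : w ≠ 1) :
    (Int.castRingHom (ZMod 5)).mapMatrix (w.toWord.map letterMatrix).prod ≠ 0 := by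
  have : Fact (Nat.Prime 5) := ⟨Nat.prime_five⟩
  have hchain : w.toWord.IsChain fun l l' =>
      isotropicVec (l.1, !l.2) ⬝ᵥ isotropicVec l' ≠ 0 :=
    FreeGroup.isReduced_toWord.imp fun _ _ => isotropicVec_dotProduct_ne_zero
  rw [map_list_prod, List.map_map, Function.comp_def, funext mapMatrix_letterMatrix]
  exact prod_map_vecMulVec_ne_zero isotropicVec_ne_zero (fun _ => isotropicVec_ne_zero _) hchain
    (FreeGroup.toWord_eq_nil_iff.not.2 hw)

theorem freeRotations_injective : Function.Injective freeRotations := by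
  refine (injective_iff_map_eq_one _).2 fun w hw => by_contra fun hw₁ => ?_
  have hlen : w.toWord.length ≠ 0 := by simpa using hw₁
  have hprod : (w.toWord.map letterMatrix).prod = (5 ^ w.toWord.length : ℤ) • 1 := by
    have hinj : Function.Injective ((Int.castRingHom ℝ).mapMatrix (m := Fin 3)) :=
      map_injective Int.cast_injective
    apply hinj
    rw [← five_pow_smul_toMatrix_freeRotations, hw]
    simp [smul_one_eq_diagonal, diagonal_map]
  have hfive : (5 : ZMod 5) = 0 := rfl
  refine mapMatrix_prod_letterMatrix_ne_zero hw₁ ?_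
  simp [hprod, smul_one_eq_diagonal, diagonal_map, hfive, hlen]

end FreeRotations

/-- Hausdorff Paradox: there is a countable subset `X ⊆ 𝕊²` such that `𝕊² \ X` is
`SO(3)`-paradoxical. -/
theorem hausdorff_paradox :
    ∃ X : Set (Fin 3 → ℝ), X ⊆ unitSphere ∧ X.Countable ∧
      IsParadoxical so3Act (unitSphere \ X) := by
  let : MulAction (FreeGroup Bool) (Fin 3 → ℝ) := MulAction.compHom _ freeRotations
  have hfix (w : FreeGroup Bool) (hw : w ≠ 1) : (unitSphere ∩ fixedBy (Fin 3 → ℝ) w).Countable :=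
    (SO3.finite_unitSphere_inter_fixedBy
      ((map_ne_one_iff freeRotations freeRotations_injective).2 hw)).countable
  obtain ⟨X, hXS, hX, hparadox⟩ := exists_countable_isParadoxical_diff isParadoxical_freeGroup_bool
    (fun w v hv => SO3.smul_mem_unitSphere (freeRotations w) hv) hfix
  exact ⟨X, hXS, hX, hparadox.reindex (fun w => (freeRotations w)⁻¹)
    fun v w => SO3.so3Act_inv v (freeRotations w)⟩
end
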